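/- Let P ⊂ ℝ^n be a convex polytope which is the convex hull of a finite subset of ℤ^n, containing 0 in its interior, and suppose P is reflexive: every supporting hyperplane of a codimension-one face of P has the form {y ∈ ℝ^n : ⟨v, y⟩ = −1} for some v ∈ ℤ^n. Then the polar polyhedron P° := {x ∈ ℝ^n : ⟨x, y⟩ ≥ −1 for all y ∈ P} is again a convex polytope which is the convex hull of a finite subset of ℤ^n, contains 0 in its interior, and is reflexive (every supporting hyperplane of a codimension-one face of P° has the form {y : ⟨w, y⟩ = −1} for some w ∈ ℤ^n); moreover (P°)° = P. -/

import Mathlib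

/-!
The vectors `u ∈ P°` whose face `{y ∈ P | ⟨u, y⟩ = -1}` spans `ℝ^n` linearly are on the one hand
the normalised facet normals of `P`, since a set on a hyperplane missing the origin spans one
dimension more linearly than affinely. On the other hand, when `P` is a polytope, they are the
extreme points of `P°`: such a face determines `u`, and conversely every `u ∈ P°` can be moved
slightly within `P°` both ways along any `d` orthogonal to its face. So, for `n ≥ 2`, `P` is
reflexive if and only if the extreme points of `P°` are integral, which by Krein–Milman makes `P°` a
lattice polytope. By the bipolar theorem the extreme points of `(P°)° = P` are integral too, so `P°`
is reflexive.
-/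

open scoped BigOperators

/-- A set `P ⊆ ℝ^n` is reflexive if every supporting hyperplane of a codimension-one
face of `P` can be written as `{y | ⟨w, y⟩ = -1}` for some integral vector `w`. -/
def IsReflexivePolytope {n : ℕ} (P : Set (Fin n → ℝ)) : Prop :=
  ∀ (v : Fin n → ℝ) (c : ℝ),
    (∀ y ∈ P, c ≤ ∑ i, v i * y i) →
    Module.finrank ℝ (vectorSpan ℝ {y | y ∈ P ∧ ∑ i, v i * y i = c}) = n - 1 →
    ∃ w : Fin n → ℤ,
      {y : Fin n → ℝ | ∑ i, v i * y i = c} =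
        {y : Fin n → ℝ | ∑ i, (w i : ℝ) * y i = -1}

/-- The polar polyhedron `P° = {x | ⟨x, y⟩ ≥ -1 for all y ∈ P}`. -/
def polarPolyhedron {n : ℕ} (P : Set (Fin n → ℝ)) : Set (Fin n → ℝ) :=
  {x | ∀ y ∈ P, -1 ≤ ∑ i, x i * y i}

open scoped Topology

section General

theorem span_eq_vectorSpan_sup_span_singleton {K V : Type*} [Ring K] [AddCommGroup V] [Module K V]
    {s : Set V} {p : V} (hp : p ∈ s) :
    Submodule.span K s = vectorSpan K s ⊔ Submodule.span K {p} := by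
  refine le_antisymm (Submodule.span_le.2 fun y hy => ?_) (sup_le ?_ ?_)
  · rw [← sub_add_cancel y p]
    exact Submodule.add_mem_sup (vsub_mem_vectorSpan K hy hp) (Submodule.mem_span_singleton_self p)
  · rw [vectorSpan_def, Submodule.span_le]
    rintro _ ⟨a, ha, b, hb, rfl⟩
    exact Submodule.sub_mem _ (Submodule.subset_span ha) (Submodule.subset_span hb)
  · exact Submodule.span_mono (Set.singleton_subset_iff.2 hp)

theorem finrank_span_eq_finrank_vectorSpan_add_one {K V : Type*} [DivisionRing K]
    [AddCommGroup V] [Module K V] [FiniteDimensional K V] {s : Set V} (hs : s.Nonempty)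
    {f : V →ₗ[K] K} {c : K} (hc : c ≠ 0) (hf : ∀ y ∈ s, f y = c) :
    Module.finrank K (Submodule.span K s) = Module.finrank K (vectorSpan K s) + 1 := by
  obtain ⟨p, hp⟩ := hs
  have hker : vectorSpan K s ≤ LinearMap.ker f := by
    rw [vectorSpan_def, Submodule.span_le]
    rintro _ ⟨a, ha, b, hb, rfl⟩
    simp [hf a ha, hf b hb]
  have hp_notMem : p ∉ vectorSpan K s := fun h => hc (by rw [← hf p hp, hker h])
  rw [span_eq_vectorSpan_sup_span_singleton hp, Submodule.finrank_sup_span_singleton hp_notMem]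

theorem eq_of_dotProduct_eqOn_of_span_eq_top {R ι : Type*} [CommSemiring R] [Fintype ι]
    {s : Set (ι → R)} (hs : Submodule.span R s = ⊤) {a b : ι → R}
    (h : ∀ y ∈ s, a ⬝ᵥ y = b ⬝ᵥ y) : a = b := by
  classical exact (dotProductEquiv R ι).injective (LinearMap.ext_on hs h)

theorem exists_ne_zero_dotProduct_eq_zero_of_span_ne_top {K ι : Type*} [Field K] [Fintype ι]
    {s : Set (ι → K)} (hs : Submodule.span K s ≠ ⊤) :
    ∃ d : ι → K, d ≠ 0 ∧ ∀ y ∈ s, d ⬝ᵥ y = 0 := by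
  classical
  obtain ⟨f, hf, hfs⟩ := Submodule.exists_le_ker_of_lt_top _ hs.lt_top
  obtain ⟨d, rfl⟩ := (dotProductEquiv K ι).surjective f
  exact ⟨d, (LinearEquiv.map_ne_zero_iff _).1 hf, fun y hy => hfs (Submodule.subset_span hy)⟩

theorem neg_one_le_inv_neg_smul_dotProduct_iff {K ι : Type*} [Field K] [LinearOrder K]
    [IsStrictOrderedRing K] [Fintype ι] {v y : ι → K} {c : K} (hc : c < 0) :
    -1 ≤ ((-c)⁻¹ • v) ⬝ᵥ y ↔ c ≤ v ⬝ᵥ y := by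
  rw [smul_dotProduct, smul_eq_mul, inv_mul_eq_div, le_div_iff₀ (neg_pos.2 hc), neg_one_mul,
    neg_neg]

theorem inv_neg_smul_dotProduct_eq_neg_one_iff {K ι : Type*} [Field K] [Fintype ι] {v y : ι → K}
    {c : K} (hc : c ≠ 0) :
    ((-c)⁻¹ • v) ⬝ᵥ y = -1 ↔ v ⬝ᵥ y = c := by
  rw [smul_dotProduct, smul_eq_mul, inv_mul_eq_div, div_eq_iff (neg_ne_zero.2 hc), neg_one_mul,
    neg_neg]

theorem eq_zero_of_dotProduct_nonneg_of_zero_mem_interior {ι : Type*} [Fintype ι]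
    {s : Set (ι → ℝ)} (h0 : 0 ∈ interior s) {v : ι → ℝ} (hv : ∀ y ∈ s, 0 ≤ v ⬝ᵥ y) : v = 0 := by
  have hcont : Continuous fun t : ℝ => t • v := by fun_prop
  have hmem : ∀ᶠ t : ℝ in 𝓝 0, t • v ∈ s :=
    hcont.continuousAt.preimage_mem_nhds (by simpa using mem_interior_iff_mem_nhds.1 h0)
  obtain ⟨t, hts, ht⟩ := ((hmem.filter_mono nhdsWithin_le_nhds).and
    (self_mem_nhdsWithin (s := Set.Iio 0))).exists
  have hvv : 0 ≤ t * (v ⬝ᵥ v) := by simpa using hv _ hts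
  have hvv_nonneg : 0 ≤ v ⬝ᵥ v := by simpa using dotProduct_star_self_nonneg v
  exact dotProduct_self_eq_zero.1
    ((nonpos_of_mul_nonneg_right hvv ht).antisymm hvv_nonneg)

theorem eq_zero_of_mem_extremePoints_of_eventually_add_smul_mem {E : Type*} [AddCommGroup E]
    [Module ℝ E] {s : Set E} {x d : E} (hx : x ∈ s.extremePoints ℝ)
    (hd : ∀ᶠ t : ℝ in 𝓝 0, x + t • d ∈ s) : d = 0 := by
  have hneg : ∀ᶠ t : ℝ in 𝓝 0, x + (-t) • d ∈ s :=
    (continuous_neg.tendsto' (0 : ℝ) 0 neg_zero).eventually hd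
  obtain ⟨t, ⟨hpos_mem, hneg_mem⟩, ht⟩ := (((hd.and hneg).filter_mono nhdsWithin_le_nhds).and
    (self_mem_nhdsWithin (s := {(0 : ℝ)}ᶜ))).exists
  have hmid : x ∈ openSegment ℝ (x + t • d) (x + (-t) • d) :=
    ⟨1 / 2, 1 / 2, by norm_num, by norm_num, by norm_num, by module⟩
  have htd : t • d = 0 := by simpa using hx.2 hpos_mem hneg_mem hmid
  exact (smul_eq_zero.1 htd).resolve_left ht

theorem convexHull_eq_of_extremePoints_subset {E : Type*} [AddCommGroup E] [Module ℝ E]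
    [TopologicalSpace E] [T2Space E] [IsTopologicalAddGroup E] [ContinuousSMul ℝ E]
    [LocallyConvexSpace ℝ E] {s t : Set E} (hs : IsCompact s) (hconv : Convex ℝ s)
    (ht : t.Finite) (hts : t ⊆ s) (hext : s.extremePoints ℝ ⊆ t) : convexHull ℝ t = s := by
  refine (convexHull_min hts hconv).antisymm ?_
  calc s = closure (convexHull ℝ (s.extremePoints ℝ)) :=
        (closure_convexHull_extremePoints hs hconv).symm
    _ ⊆ convexHull ℝ t :=
        closure_minimal (convexHull_mono hext) (ht.isCompact_convexHull ℝ).isClosed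

end General

section LatticePoints

/-- The lattice `ℤ^ι` inside `ℝ^ι`. -/
def latticePoints (ι : Type*) : Set (ι → ℝ) :=
  Set.range fun (w : ι → ℤ) i => (w i : ℝ)

theorem finite_intCast_preimage_of_isCompact {ι : Type*} [Finite ι] {s : Set (ι → ℝ)}
    (hs : IsCompact s) : {w : ι → ℤ | (fun i => (w i : ℝ)) ∈ s}.Finite := by
  have htendsto : Filter.Tendsto (fun (w : ι → ℤ) i => (w i : ℝ)) Filter.cofinite
      (Filter.cocompact (ι → ℝ)) := by
    rw [← Filter.coprodᵢ_cofinite, ← Filter.coprodᵢ_cocompact]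
    exact Filter.Tendsto.pi_map_coprodᵢ fun _ => Int.tendsto_coe_cofinite
  simpa [Filter.mem_cofinite, Set.compl_def] using htendsto hs.compl_mem_cocompact

theorem exists_finset_eq_convexHull_of_extremePoints_subset_latticePoints {ι : Type*} [Finite ι]
    {s : Set (ι → ℝ)} (hs : IsCompact s) (hconv : Convex ℝ s)
    (hext : s.extremePoints ℝ ⊆ latticePoints ι) :
    ∃ V : Finset (ι → ℤ), s = convexHull ℝ ((fun v : ι → ℤ => fun i => (v i : ℝ)) '' ↑V) := by
  have hfin := finite_intCast_preimage_of_isCompact hs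
  refine ⟨hfin.toFinset, ?_⟩
  rw [hfin.coe_toFinset]
  refine (convexHull_eq_of_extremePoints_subset hs hconv (hfin.image _) ?_ fun x hx => ?_).symm
  · rintro _ ⟨w, hw, rfl⟩
    exact hw
  · obtain ⟨w, rfl⟩ := hext hx
    exact ⟨w, hx.1, rfl⟩

end LatticePoints

variable {n : ℕ} {P : Set (Fin n → ℝ)}

section Polar

theorem mem_polarPolyhedron {x : Fin n → ℝ} : x ∈ polarPolyhedron P ↔ ∀ y ∈ P, -1 ≤ x ⬝ᵥ y :=
  Iff.rfl

theorem polarPolyhedron_eq_biInter :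
    polarPolyhedron P = ⋂ y ∈ P, {x | -1 ≤ x ⬝ᵥ y} := by
  ext x
  simp only [mem_polarPolyhedron, Set.mem_iInter, Set.mem_ofPred_eq]

theorem convex_polarPolyhedron : Convex ℝ (polarPolyhedron P) := by
  rw [polarPolyhedron_eq_biInter]
  exact convex_iInter₂ fun y _ =>
    convex_halfSpace_ge ((dotProductBilin ℝ ℝ).flip y).isLinear (-1)

theorem isClosed_polarPolyhedron : IsClosed (polarPolyhedron P) := by
  rw [polarPolyhedron_eq_biInter]
  exact isClosed_biInter fun y _ =>
    isClosed_le continuous_const (continuous_id.dotProduct continuous_const)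

theorem mem_polarPolyhedron_convexHull {S : Set (Fin n → ℝ)} {x : Fin n → ℝ} :
    x ∈ polarPolyhedron (convexHull ℝ S) ↔ ∀ y ∈ S, -1 ≤ x ⬝ᵥ y :=
  ⟨fun h y hy => h y (subset_convexHull ℝ S hy), fun h =>
    convexHull_min h (convex_halfSpace_ge (dotProductBilin ℝ ℝ x).isLinear (-1))⟩

theorem isBounded_polarPolyhedron (h0 : 0 ∈ interior P) :
    Bornology.IsBounded (polarPolyhedron P) := by
  obtain ⟨r, hr, hball⟩ := Metric.nhds_basis_closedBall.mem_iff.1 (mem_interior_iff_mem_nhds.1 h0)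
  refine Metric.isBounded_closedBall.subset (t := Metric.closedBall 0 r⁻¹) fun x hx => ?_
  have hcoord : ∀ (i : Fin n) (s : ℝ), |s| ≤ r → -1 ≤ x i * s := fun i s hs => by
    have hmem : Pi.single i s ∈ P := hball (by simpa [Pi.norm_single] using hs)
    simpa only [dotProduct_single] using mem_polarPolyhedron.1 hx _ hmem
  rw [mem_closedBall_zero_iff, pi_norm_le_iff_of_nonneg (by positivity)]
  intro i
  have hpos := hcoord i r (abs_of_pos hr).le
  have hneg := hcoord i (-r) (by rw [abs_neg, abs_of_pos hr])
  rw [Real.norm_eq_abs, abs_le', ← one_div, le_div_iff₀ hr, le_div_iff₀ hr]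
  constructor <;> linarith

theorem isCompact_polarPolyhedron (h0 : 0 ∈ interior P) : IsCompact (polarPolyhedron P) :=
  Metric.isCompact_of_isClosed_isBounded isClosed_polarPolyhedron (isBounded_polarPolyhedron h0)

theorem zero_mem_interior_polarPolyhedron (hP : Bornology.IsBounded P) :
    0 ∈ interior (polarPolyhedron P) := by
  have hcont : Continuous fun z : (Fin n → ℝ) × (Fin n → ℝ) => z.1 ⬝ᵥ z.2 :=
    continuous_fst.dotProduct continuous_snd
  have hev : ∀ᶠ x in 𝓝 (0 : Fin n → ℝ), ∀ y ∈ closure P, -1 < x ⬝ᵥ y :=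
    hP.isCompact_closure.eventually_forall_of_forall_eventually fun y _ =>
      hcont.continuousAt.eventually_const_lt (by simp)
  rw [mem_interior_iff_mem_nhds]
  filter_upwards [hev] with x hx y hy using (hx y (subset_closure hy)).le

theorem subset_polarPolyhedron_polarPolyhedron : P ⊆ polarPolyhedron (polarPolyhedron P) :=
  fun y hy x hx => (hx y hy).trans_eq (dotProduct_comm x y)

theorem polarPolyhedron_polarPolyhedron (hconv : Convex ℝ P) (hclosed : IsClosed P)
    (h0 : 0 ∈ P) : polarPolyhedron (polarPolyhedron P) = P := by
  refine subset_polarPolyhedron_polarPolyhedron.antisymm' fun z hz => ?_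
  by_contra hzP
  obtain ⟨f, c, hfz, hfP⟩ := geometric_hahn_banach_point_closed hconv hclosed hzP
  obtain ⟨d, hd⟩ := (dotProductEquiv ℝ (Fin n)).surjective f.toLinearMap
  have hf : ∀ y, f y = d ⬝ᵥ y := fun y => (LinearMap.congr_fun hd y).symm
  have hc : c < 0 := by simpa using hfP 0 h0
  have hmem : (-c)⁻¹ • d ∈ polarPolyhedron P := fun y hy =>
    (neg_one_le_inv_neg_smul_dotProduct_iff hc).2 (hf y ▸ (hfP y hy).le)
  have hcz : c ≤ d ⬝ᵥ z := by
    rw [← neg_one_le_inv_neg_smul_dotProduct_iff hc, dotProduct_comm]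
    exact hz _ hmem
  exact hcz.not_gt (hf z ▸ hfz)

end Polar

section Faces

/-- The face of `P` cut out by the hyperplane `⟨u, ·⟩ = -1`, which for `u ∈ P°` is the face of `P`
dual to `u`. -/
def polarFace (P : Set (Fin n → ℝ)) (u : Fin n → ℝ) : Set (Fin n → ℝ) :=
  {y | y ∈ P ∧ u ⬝ᵥ y = -1}

variable {u : Fin n → ℝ}

theorem finrank_vectorSpan_polarFace_eq_iff (hn : 2 ≤ n) :
    Module.finrank ℝ (vectorSpan ℝ (polarFace P u)) = n - 1 ↔
      Submodule.span ℝ (polarFace P u) = ⊤ := by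
  have htop : Submodule.span ℝ (polarFace P u) = ⊤ ↔
      Module.finrank ℝ (Submodule.span ℝ (polarFace P u)) = n :=
    ⟨fun h => by rw [h, finrank_top, Module.finrank_fin_fun], fun h =>
      Submodule.eq_top_of_finrank_eq (h.trans (Module.finrank_fin_fun ℝ).symm)⟩
  rw [htop]
  obtain hempty | hne := (polarFace P u).eq_empty_or_nonempty
  · rw [hempty, vectorSpan_empty, Submodule.span_empty, finrank_bot]
    lia
  · rw [finrank_span_eq_finrank_vectorSpan_add_one hne (f := dotProductBilin ℝ ℝ u)
      (neg_ne_zero.2 one_ne_zero) fun y hy => hy.2]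
    lia

theorem mem_extremePoints_polarPolyhedron_of_span_polarFace_eq_top (hu : u ∈ polarPolyhedron P)
    (hspan : Submodule.span ℝ (polarFace P u) = ⊤) :
    u ∈ (polarPolyhedron P).extremePoints ℝ := by
  rw [mem_extremePoints_iff_left]
  refine ⟨hu, fun a ha b hb ⟨s, t, hs, ht, hst, hab⟩ => ?_⟩
  refine eq_of_dotProduct_eqOn_of_span_eq_top hspan fun y hy => ?_
  have hcomb : s * (a ⬝ᵥ y) + t * (b ⬝ᵥ y) = -1 := by
    simpa only [← hab, add_dotProduct, smul_dotProduct, smul_eq_mul] using hy.2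
  have hb_le : t * -1 ≤ t * (b ⬝ᵥ y) := mul_le_mul_of_nonneg_left (hb y hy.1) ht.le
  have ha_le : a ⬝ᵥ y ≤ -1 := le_of_mul_le_mul_left (by linarith) hs
  exact (ha_le.antisymm (ha y hy.1)).trans hy.2.symm

theorem eventually_add_smul_mem_polarPolyhedron_convexHull {S : Set (Fin n → ℝ)} (hS : S.Finite)
    {d : Fin n → ℝ} (hu : u ∈ polarPolyhedron (convexHull ℝ S))
    (hd : ∀ y ∈ polarFace S u, d ⬝ᵥ y = 0) :
    ∀ᶠ t : ℝ in 𝓝 0, u + t • d ∈ polarPolyhedron (convexHull ℝ S) := by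
  simp only [mem_polarPolyhedron_convexHull, add_dotProduct, smul_dotProduct, smul_eq_mul]
  rw [Filter.eventually_all_finite hS]
  intro y hy
  obtain htight | hslack := (mem_polarPolyhedron_convexHull.1 hu y hy).eq_or_lt
  · exact Filter.Eventually.of_forall fun t => by rw [hd y ⟨hy, htight.symm⟩, ← htight]; simp
  · have hcont : Continuous fun t : ℝ => u ⬝ᵥ y + t * d ⬝ᵥ y := by fun_prop
    exact (hcont.continuousAt.eventually_const_lt (by simpa using hslack)).mono fun _ => le_of_lt

theorem span_polarFace_eq_top_of_mem_extremePoints {S : Set (Fin n → ℝ)} (hS : S.Finite)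
    (hu : u ∈ (polarPolyhedron (convexHull ℝ S)).extremePoints ℝ) :
    Submodule.span ℝ (polarFace (convexHull ℝ S) u) = ⊤ := by
  suffices hspan : Submodule.span ℝ (polarFace S u) = ⊤ from
    top_unique (hspan ▸ Submodule.span_mono fun y hy => ⟨subset_convexHull ℝ S hy.1, hy.2⟩)
  by_contra hspan
  obtain ⟨d, hd0, hd⟩ := exists_ne_zero_dotProduct_eq_zero_of_span_ne_top hspan
  exact hd0 (eq_zero_of_mem_extremePoints_of_eventually_add_smul_mem hu
    (eventually_add_smul_mem_polarPolyhedron_convexHull hS hu.1 hd))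

end Faces

section Reflexive

theorem not_isReflexivePolytope_fin_zero {P : Set (Fin 0 → ℝ)} : ¬ IsReflexivePolytope P := by
  intro hrefl
  -- `n - 1 = 0` is also the dimension of `P` itself, the face on the degenerate hyperplane `0 = 0`.
  obtain ⟨w, hw⟩ := hrefl 0 0 (by simp) Module.finrank_zero_of_subsingleton
  have hmem : (0 : Fin 0 → ℝ) ∈ {y : Fin 0 → ℝ | ∑ i, (w i : ℝ) * y i = -1} := hw ▸ (by simp)
  simp at hmem

theorem not_isReflexivePolytope_fin_one {P : Set (Fin 1 → ℝ)} (hP : Bornology.IsBounded P) :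
    ¬ IsReflexivePolytope P := by
  intro hrefl
  obtain ⟨R, hR, hPR⟩ := hP.exists_pos_norm_le
  have hlow : ∀ y ∈ P, -(R + 1) < y 0 := fun y hy => by
    linarith [(abs_le.1 ((norm_le_pi_norm y 0).trans (hPR y hy))).1]
  -- The empty face has dimension `0 = n - 1`, so any point to the left of `P` is a hyperplane of
  -- the kind that reflexivity constrains.
  have hempty : {y | y ∈ P ∧ ∑ i, (1 : Fin 1 → ℝ) i * y i = -(R + 1)} = ∅ :=
    Set.eq_empty_of_forall_notMem fun y ⟨hy, hyR⟩ => (hlow y hy).ne' (by simpa using hyR)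
  obtain ⟨w, hw⟩ := hrefl 1 (-(R + 1)) (fun y hy => by simpa using (hlow y hy).le)
    (by rw [hempty, vectorSpan_empty, finrank_bot])
  have hmem : (fun _ => -(R + 1)) ∈ {y : Fin 1 → ℝ | ∑ i, (w i : ℝ) * y i = -1} :=
    hw ▸ (by simp)
  have hmul : (w 0 : ℝ) * (R + 1) = 1 := by
    simpa only [Finset.univ_unique, Fin.default_eq_zero, Finset.sum_singleton, mul_neg, neg_inj,
      Set.mem_ofPred_eq] using hmem
  have hpos : (0 : ℝ) < w 0 := pos_of_mul_pos_left (hmul ▸ one_pos) (by linarith)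
  have hone : (1 : ℝ) ≤ w 0 := by exact_mod_cast hpos
  nlinarith

theorem two_le_of_isReflexivePolytope (hP : Bornology.IsBounded P) (hrefl : IsReflexivePolytope P) :
    2 ≤ n := by
  match n with
  | 0 => exact absurd hrefl not_isReflexivePolytope_fin_zero
  | 1 => exact absurd hrefl (not_isReflexivePolytope_fin_one hP)
  | _ + 2 => exact Nat.le_add_left 2 _

theorem neg_of_finrank_face_eq (hn : 0 < n) (h0 : 0 ∈ interior P) {v : Fin n → ℝ} {c : ℝ}
    (hvc : ∀ y ∈ P, c ≤ v ⬝ᵥ y)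
    (hdim : Module.finrank ℝ (vectorSpan ℝ {y | y ∈ P ∧ v ⬝ᵥ y = c}) = n - 1) : c < 0 := by
  have hc : c ≤ 0 := by simpa using hvc 0 (interior_subset h0)
  refine hc.lt_of_ne ?_
  rintro rfl
  obtain rfl : v = 0 := eq_zero_of_dotProduct_nonneg_of_zero_mem_interior h0 hvc
  have hspan : vectorSpan ℝ P = ⊤ :=
    AffineSubspace.vectorSpan_eq_top_of_affineSpan_eq_top ℝ _ _
      (affineSpan_eq_top_of_nonempty_interior ⟨0, interior_mono (subset_convexHull ℝ P) h0⟩)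
  have hface : {y | y ∈ P ∧ (0 : Fin n → ℝ) ⬝ᵥ y = 0} = P :=
    Set.ext fun y => and_iff_left (zero_dotProduct y)
  rw [hface, hspan, finrank_top, Module.finrank_fin_fun] at hdim
  lia

theorem mem_latticePoints_of_span_polarFace_eq_top (hn : 2 ≤ n) (hrefl : IsReflexivePolytope P)
    {u : Fin n → ℝ} (hu : u ∈ polarPolyhedron P)
    (hspan : Submodule.span ℝ (polarFace P u) = ⊤) : u ∈ latticePoints (Fin n) := by
  obtain ⟨w, hw⟩ := hrefl u (-1) hu ((finrank_vectorSpan_polarFace_eq_iff hn).2 hspan)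
  refine ⟨w, eq_of_dotProduct_eqOn_of_span_eq_top hspan fun y hy => ?_⟩
  exact (hw.subset hy.2 : _ ⬝ᵥ y = -1).trans hy.2.symm

theorem extremePoints_polarPolyhedron_convexHull_subset_latticePoints (hn : 2 ≤ n)
    {S : Set (Fin n → ℝ)} (hS : S.Finite) (hrefl : IsReflexivePolytope (convexHull ℝ S)) :
    (polarPolyhedron (convexHull ℝ S)).extremePoints ℝ ⊆ latticePoints (Fin n) := fun _ hu =>
  mem_latticePoints_of_span_polarFace_eq_top hn hrefl hu.1
    (span_polarFace_eq_top_of_mem_extremePoints hS hu)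

theorem isReflexivePolytope_of_extremePoints_subset_latticePoints (hn : 2 ≤ n)
    (h0 : 0 ∈ interior P)
    (hext : (polarPolyhedron P).extremePoints ℝ ⊆ latticePoints (Fin n)) :
    IsReflexivePolytope P := by
  intro v c hvc hdim
  have hc : c < 0 := neg_of_finrank_face_eq (by lia) h0 hvc hdim
  have hpolar : (-c)⁻¹ • v ∈ polarPolyhedron P := fun y hy =>
    (neg_one_le_inv_neg_smul_dotProduct_iff hc).2 (hvc y hy)
  have hface : {y | y ∈ P ∧ ∑ i, v i * y i = c} = polarFace P ((-c)⁻¹ • v) :=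
    Set.ext fun y => and_congr_right fun _ => (inv_neg_smul_dotProduct_eq_neg_one_iff hc.ne).symm
  rw [hface, finrank_vectorSpan_polarFace_eq_iff hn] at hdim
  obtain ⟨w, hw⟩ :=
    hext (mem_extremePoints_polarPolyhedron_of_span_polarFace_eq_top hpolar hdim)
  refine ⟨w, Set.ext fun y => (inv_neg_smul_dotProduct_eq_neg_one_iff hc.ne).symm.trans ?_⟩
  rw [← hw]
  rfl

end Reflexive

/-- Batyrev's lemma: if `P` is a reflexive lattice polytope (the convex hull of finitely
many lattice points, with `0` in its interior), then its polar polyhedron `P°` is again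
a reflexive lattice polytope with `0` in its interior, and `(P°)° = P`. -/
theorem polar_of_reflexive_is_reflexive {n : ℕ} (V : Finset (Fin n → ℤ))
    (P : Set (Fin n → ℝ))
    (hP : P = convexHull ℝ ((fun v : Fin n → ℤ => fun i => (v i : ℝ)) '' ↑V))
    (h0 : (0 : Fin n → ℝ) ∈ interior P)
    (hrefl : IsReflexivePolytope P) :
    (∃ V' : Finset (Fin n → ℤ),
        polarPolyhedron P =
          convexHull ℝ ((fun v : Fin n → ℤ => fun i => (v i : ℝ)) '' ↑V')) ∧
    (0 : Fin n → ℝ) ∈ interior (polarPolyhedron P) ∧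
    IsReflexivePolytope (polarPolyhedron P) ∧
    polarPolyhedron (polarPolyhedron P) = P := by
  subst hP
  set S : Set (Fin n → ℝ) := (fun v : Fin n → ℤ => fun i => (v i : ℝ)) '' ↑V
  have hS : S.Finite := V.finite_toSet.image _
  have hcompact : IsCompact (convexHull ℝ S) := hS.isCompact_convexHull ℝ
  have hn : 2 ≤ n := two_le_of_isReflexivePolytope hcompact.isBounded hrefl
  have hbipolar : polarPolyhedron (polarPolyhedron (convexHull ℝ S)) = convexHull ℝ S :=
    polarPolyhedron_polarPolyhedron (convex_convexHull ℝ S) hcompact.isClosed (interior_subset h0)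
  have h0_polar : 0 ∈ interior (polarPolyhedron (convexHull ℝ S)) :=
    zero_mem_interior_polarPolyhedron hcompact.isBounded
  refine ⟨?_, h0_polar, ?_, hbipolar⟩
  · exact exists_finset_eq_convexHull_of_extremePoints_subset_latticePoints
      (isCompact_polarPolyhedron h0) convex_polarPolyhedron
      (extremePoints_polarPolyhedron_convexHull_subset_latticePoints hn hS hrefl)
  · refine isReflexivePolytope_of_extremePoints_subset_latticePoints hn h0_polar ?_
    rw [hbipolar]
    exact extremePoints_convexHull_subset.trans (Set.image_subset_range _ _)
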